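/- Let Ω ⊂ ℝ² be open and bounded, a, m > 0, and define Σ = sup_{K ⊂ Ω^c compact} inf { (1/m)‖(∇ - iF)φ‖²_{L²} + a : φ ∈ C₀^∞(Ω^c \ K), ‖φ‖_{L²} = 1 }, where F(x₁,x₂) = (−x₂/2, x₁/2). Then Σ ≥ 1/m + a. Consequently, the bottom of the essential spectrum of the interface operator P (associated with the quadratic form Q(φ) = ∫_Ω(|∇_F φ|² − |φ|²) + ∫_{Ω^c}((1/m)|∇_F φ|² + a|φ|²)) is at least 1/m + a. -/

import Mathlib

open MeasureTheory Set Filter Topology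

noncomputable section

/-- First component of the magnetic gradient `(∇ - iA)φ` on `ℝ²`. -/
def mg1 (A : ℝ × ℝ → ℝ × ℝ) (φ : ℝ × ℝ → ℂ) (x : ℝ × ℝ) : ℂ :=
  fderiv ℝ φ x (1, 0) - ((A x).1 : ℂ) * Complex.I * φ x

/-- Second component of the magnetic gradient `(∇ - iA)φ` on `ℝ²`. -/
def mg2 (A : ℝ × ℝ → ℝ × ℝ) (φ : ℝ × ℝ → ℂ) (x : ℝ × ℝ) : ℂ :=
  fderiv ℝ φ x (0, 1) - ((A x).2 : ℂ) * Complex.I * φ x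

/-- Pointwise squared norm of the magnetic gradient. -/
def mnorm2 (A : ℝ × ℝ → ℝ × ℝ) (φ : ℝ × ℝ → ℂ) (x : ℝ × ℝ) : ℝ :=
  ‖mg1 A φ x‖^2 + ‖mg2 A φ x‖^2

/-- The canonical magnetic potential `F(x₁,x₂) = (-x₂/2, x₁/2)` with `curl F = 1`. -/
def Fpot : ℝ × ℝ → ℝ × ℝ := fun x => (-x.2 / 2, x.1 / 2)

/-- Persson's quantity `Σ` for the interface operator: the sup over compact
`K ⊆ Ωᶜ` of the infimum of `(1/m)‖(∇-iF)φ‖² + a` over normalized test functions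
`φ ∈ C₀^∞(Ωᶜ \ K)`. -/
def SigmaP (Ω : Set (ℝ × ℝ)) (a m : ℝ) : ℝ :=
  sSup {s : ℝ | ∃ K : Set (ℝ × ℝ), IsCompact K ∧ K ⊆ Ωᶜ ∧
    s = sInf {r : ℝ | ∃ φ : ℝ × ℝ → ℂ, ContDiff ℝ (⊤ : ℕ∞) φ ∧ HasCompactSupport φ ∧
      tsupport φ ⊆ Ωᶜ \ K ∧ (∫ x : ℝ × ℝ, ‖φ x‖^2) = 1 ∧
      r = (1/m) * (∫ x : ℝ × ℝ, mnorm2 Fpot φ x) + a}}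

/-!
Write `D₁, D₂` for the components of `∇ - iA`. The commutator `[D₁, D₂] = -i curl A` shows that
`|D₁φ + i D₂φ|²` equals `|D₁φ|² + |D₂φ|² - curl A |φ|² - curl J`, where `J` is the compactly
supported current `Im (φ̄ Dφ)`. The left side is nonnegative and `curl J` integrates to zero, so
`∫ curl A |φ|² ≤ ∫ |∇_A φ|²`; for `A = F` this is the lower bound `1` on every infimum in `Σ`.

Since `Σ` is a real supremum, the infima must also be bounded above uniformly in `K`: magnetic
translations carry one fixed test function away from `Ω ∪ K` without changing its energy.
-/

section MagneticDerivative

open Complex ComplexConjugate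

variable {E : Type*} [NormedAddCommGroup E] [NormedSpace ℝ E] {a b χ : E → ℝ} {v w : E}
  {φ ψ : E → ℂ} {x : E}

/-- The magnetic derivative `(∂ᵥ - ia)φ` in the direction `v`, where `a` is the component along `v`
of the magnetic potential. -/
def magneticDeriv (a : E → ℝ) (v : E) (φ : E → ℂ) (x : E) : ℂ :=
  fderiv ℝ φ x v - (a x : ℂ) * I * φ x

/-- The curl `∂ᵥb - ∂_w a` of the planar vector field whose components along `v` and `w` are `a` and
`b`. Applied to a magnetic potential it is the magnetic field. -/
def planarCurl (v w : E) (a b : E → ℝ) (x : E) : ℝ :=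
  fderiv ℝ b x v - fderiv ℝ a x w

lemma contDiff_magneticDeriv {n : WithTop ℕ∞} (ha : ContDiff ℝ n a) (hφ : ContDiff ℝ (n + 1) φ) :
    ContDiff ℝ n (magneticDeriv a v φ) :=
  ((hφ.fderiv_right le_rfl).clm_apply contDiff_const).sub
    (((ofRealCLM.contDiff.comp ha).mul contDiff_const).mul (hφ.of_le le_self_add))

lemma hasCompactSupport_magneticDeriv (hφ : HasCompactSupport φ) :
    HasCompactSupport (magneticDeriv a v φ) :=
  (hφ.fderiv_apply ℝ v).sub hφ.mul_left

lemma differentiableAt_magneticDeriv (ha : DifferentiableAt ℝ a x) (hφ : ContDiffAt ℝ 2 φ x) :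
    DifferentiableAt ℝ (magneticDeriv a v φ) x := by
  have hdφ : DifferentiableAt ℝ (fderiv ℝ φ) x :=
    (hφ.fderiv_right (m := 1) le_rfl).differentiableAt one_ne_zero
  have hφ' : DifferentiableAt ℝ φ x := hφ.differentiableAt two_ne_zero
  unfold magneticDeriv
  fun_prop

lemma fderiv_magneticDeriv (ha : DifferentiableAt ℝ a x) (hφ : ContDiffAt ℝ 2 φ x) :
    fderiv ℝ (magneticDeriv a v φ) x w = fderiv ℝ (fderiv ℝ φ) x w v -
      ((fderiv ℝ a x w : ℂ) * I * φ x + (a x : ℂ) * I * fderiv ℝ φ x w) := by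
  have hdφ : HasFDerivAt (fderiv ℝ φ) (fderiv ℝ (fderiv ℝ φ) x) x :=
    ((hφ.fderiv_right (m := 1) le_rfl).differentiableAt one_ne_zero).hasFDerivAt
  have hφ' : HasFDerivAt φ (fderiv ℝ φ x) x := (hφ.differentiableAt two_ne_zero).hasFDerivAt
  have ha' : HasFDerivAt (fun y => (a y : ℂ)) (ofRealCLM.comp (fderiv ℝ a x)) x :=
    ofRealCLM.hasFDerivAt.comp x ha.hasFDerivAt
  have h : HasFDerivAt (magneticDeriv a v φ) _ x :=
    (hdφ.clm_apply (hasFDerivAt_const v x)).sub ((ha'.mul_const I).mul hφ')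
  rw [h.fderiv]
  simp only [ContinuousLinearMap.comp_zero, zero_add, sub_apply, ContinuousLinearMap.flip_apply,
    add_apply, smul_apply, smul_eq_mul, ContinuousLinearMap.comp_apply, ofRealCLM_apply,
    sub_right_inj]
  ring

lemma magneticDeriv_commutator (ha : DifferentiableAt ℝ a x) (hb : DifferentiableAt ℝ b x)
    (hφ : ContDiffAt ℝ 2 φ x) :
    magneticDeriv a v (magneticDeriv b w φ) x - magneticDeriv b w (magneticDeriv a v φ) x =
      -I * (planarCurl v w a b x : ℂ) * φ x := by
  have hsymm : fderiv ℝ (fderiv ℝ φ) x v w = fderiv ℝ (fderiv ℝ φ) x w v :=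
    hφ.isSymmSndFDerivAt (by simp) v w
  rw [magneticDeriv.eq_def a v (magneticDeriv b w φ),
    magneticDeriv.eq_def b w (magneticDeriv a v φ), fderiv_magneticDeriv hb hφ,
    fderiv_magneticDeriv ha hφ, hsymm]
  simp only [magneticDeriv, planarCurl]
  push_cast
  ring

-- The potential drops out because `ia` is purely imaginary.
lemma fderiv_conj_mul_eq_magneticDeriv (a : E → ℝ) (hφ : DifferentiableAt ℝ φ x)
    (hψ : DifferentiableAt ℝ ψ x) :
    fderiv ℝ (fun y => conj (φ y) * ψ y) x v =
      conj (magneticDeriv a v φ x) * ψ x + conj (φ x) * magneticDeriv a v ψ x := by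
  have h : HasFDerivAt (fun y => conj (φ y) * ψ y) _ x :=
    (conjCLE.hasFDerivAt.comp x hφ.hasFDerivAt).mul hψ.hasFDerivAt
  rw [h.fderiv]
  simp only [ContinuousAlgEquiv.coe_coeCLE, Function.comp_apply, conjCAE_apply, add_apply,
    smul_apply, smul_eq_mul, ContinuousLinearMap.comp_apply, ContinuousLinearEquiv.coe_coe,
    ContinuousAlgEquiv.coeCLE_apply, magneticDeriv, map_sub, map_mul, conj_ofReal, conj_I, mul_neg,
    neg_mul, sub_neg_eq_add]
  ring

/-- The component `Im(φ̄ (∂ᵥ - ia)φ)` along `v` of the gauge-invariant probability current. -/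
def magneticCurrent (a : E → ℝ) (v : E) (φ : E → ℂ) (x : E) : ℝ :=
  (conj (φ x) * magneticDeriv a v φ x).im

lemma contDiff_magneticCurrent {n : WithTop ℕ∞} (ha : ContDiff ℝ n a)
    (hφ : ContDiff ℝ (n + 1) φ) : ContDiff ℝ n (magneticCurrent a v φ) :=
  imCLM.contDiff.comp
    ((conjCLE.contDiff.comp (hφ.of_le le_self_add)).mul (contDiff_magneticDeriv ha hφ))

lemma hasCompactSupport_magneticCurrent (hφ : HasCompactSupport φ) :
    HasCompactSupport (magneticCurrent a v φ) :=
  ((hasCompactSupport_magneticDeriv hφ).mul_left).comp_left zero_im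

lemma fderiv_magneticCurrent (c : E → ℝ) (ha : DifferentiableAt ℝ a x) (hφ : ContDiffAt ℝ 2 φ x) :
    fderiv ℝ (magneticCurrent a v φ) x w =
      (conj (magneticDeriv c w φ x) * magneticDeriv a v φ x +
        conj (φ x) * magneticDeriv c w (magneticDeriv a v φ) x).im := by
  have hφ' : DifferentiableAt ℝ φ x := hφ.differentiableAt two_ne_zero
  have hD : DifferentiableAt ℝ (magneticDeriv a v φ) x := differentiableAt_magneticDeriv ha hφ
  have hmul : DifferentiableAt ℝ (fun y => conj (φ y) * magneticDeriv a v φ y) x :=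
    (conjCLE.differentiableAt.comp x hφ').mul hD
  have h : HasFDerivAt (magneticCurrent a v φ) _ x := imCLM.hasFDerivAt.comp x hmul.hasFDerivAt
  rw [h.fderiv, ← fderiv_conj_mul_eq_magneticDeriv c hφ' hD]
  rfl

lemma planarCurl_magneticCurrent (ha : DifferentiableAt ℝ a x) (hb : DifferentiableAt ℝ b x)
    (hφ : ContDiffAt ℝ 2 φ x) :
    planarCurl v w (magneticCurrent a v φ) (magneticCurrent b w φ) x =
      2 * (conj (magneticDeriv a v φ x) * magneticDeriv b w φ x).im -
        planarCurl v w a b x * ‖φ x‖ ^ 2 := by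
  have hcomm : (conj (φ x) * (magneticDeriv a v (magneticDeriv b w φ) x -
      magneticDeriv b w (magneticDeriv a v φ) x)).im = -(planarCurl v w a b x * ‖φ x‖ ^ 2) := by
    rw [magneticDeriv_commutator ha hb hφ, Complex.sq_norm, normSq_apply]
    simp only [neg_mul, mul_neg, neg_im, mul_im, conj_re, mul_re, I_re, ofReal_re, zero_mul, I_im,
      ofReal_im, mul_zero, sub_self, one_mul, zero_add, conj_im, zero_sub, neg_neg, neg_add_rev]
    ring
  rw [planarCurl, fderiv_magneticCurrent a hb hφ, fderiv_magneticCurrent b ha hφ]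
  simp only [mul_sub, sub_im, add_im, mul_im, conj_re, conj_im] at hcomm ⊢
  linear_combination hcomm

-- The Bochner–Weitzenböck identity of the planar Dirac operator with potential `(a, b)`.
lemma norm_sq_magneticDeriv_add_I_mul (ha : DifferentiableAt ℝ a x) (hb : DifferentiableAt ℝ b x)
    (hφ : ContDiffAt ℝ 2 φ x) :
    ‖magneticDeriv a v φ x + I * magneticDeriv b w φ x‖ ^ 2 =
      ‖magneticDeriv a v φ x‖ ^ 2 + ‖magneticDeriv b w φ x‖ ^ 2 -
        planarCurl v w a b x * ‖φ x‖ ^ 2 -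
        planarCurl v w (magneticCurrent a v φ) (magneticCurrent b w φ) x := by
  rw [planarCurl_magneticCurrent ha hb hφ]
  simp only [Complex.sq_norm, normSq_apply, add_re, add_im, mul_re, mul_im, I_re, I_im, conj_re,
    conj_im]
  ring

lemma magneticDeriv_exp_mul (hχ : DifferentiableAt ℝ χ x) (hφ : DifferentiableAt ℝ φ x)
    (hab : b x = a x + fderiv ℝ χ x v) :
    magneticDeriv b v (fun y => cexp (χ y * I) * φ y) x =
      cexp (χ x * I) * magneticDeriv a v φ x := by
  have hχ' : HasFDerivAt (fun y => (χ y : ℂ)) (ofRealCLM.comp (fderiv ℝ χ x)) x :=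
    ofRealCLM.hasFDerivAt.comp x hχ.hasFDerivAt
  have h : HasFDerivAt (fun y => cexp (χ y * I) * φ y) _ x :=
    (hχ'.mul_const I).cexp.mul hφ.hasFDerivAt
  rw [magneticDeriv, h.fderiv, hab]
  simp only [add_apply, smul_apply, smul_eq_mul, ContinuousLinearMap.comp_apply, ofRealCLM_apply,
    ofReal_add, magneticDeriv]
  ring

lemma magneticDeriv_comp_sub (h : E) :
    magneticDeriv (fun y => a (y - h)) v (fun y => φ (y - h)) x = magneticDeriv a v φ (x - h) := by
  rw [magneticDeriv, fderiv_comp_sub, magneticDeriv]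

end MagneticDerivative

section MagneticLowerBound

open Complex

lemma hasCompactSupport_norm_sq {X F : Type*} [TopologicalSpace X] [NormedAddCommGroup F]
    {f : X → F} (hfs : HasCompactSupport f) : HasCompactSupport (fun x => ‖f x‖ ^ 2) :=
  hfs.comp_left (g := fun z : F => ‖z‖ ^ 2) (by simp)

lemma continuous_fderiv_apply {E F : Type*} [NormedAddCommGroup E] [NormedSpace ℝ E]
    [NormedAddCommGroup F] [NormedSpace ℝ F] {f : E → F} (hf : ContDiff ℝ 1 f) (v : E) :
    Continuous (fun x => fderiv ℝ f x v) :=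
  (hf.continuous_fderiv one_ne_zero).clm_apply continuous_const

variable {E : Type*} [NormedAddCommGroup E] [NormedSpace ℝ E] [FiniteDimensional ℝ E]
  [MeasurableSpace E] [BorelSpace E] {μ : Measure E} [μ.IsAddHaarMeasure] {a b : E → ℝ}

lemma integral_fderiv_apply_eq_zero {F : Type*} [NormedAddCommGroup F] [NormedSpace ℝ F]
    {f : E → F} (hf : ContDiff ℝ 1 f) (hfs : HasCompactSupport f) (v : E) :
    ∫ x, fderiv ℝ f x v ∂μ = 0 := by
  have hf' : Integrable (fun x => fderiv ℝ f x v) μ :=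
    (continuous_fderiv_apply hf v).integrable_of_hasCompactSupport (hfs.fderiv_apply ℝ v)
  have h := integral_smul_fderiv_eq_neg_fderiv_smul_of_integrable (𝕜 := ℝ) (μ := μ)
    (f := fun _ => 1) (g := f) (v := v) (by simp)
    (by simpa only [one_smul] using hf')
    (by simpa only [one_smul] using hf.continuous.integrable_of_hasCompactSupport hfs)
    (fun x _ => differentiableAt_const 1) (fun x _ => hf.differentiable one_ne_zero x)
  simpa using h

lemma integrable_planarCurl_and_integral_eq_zero (v w : E) (ha : ContDiff ℝ 1 a)
    (has : HasCompactSupport a) (hb : ContDiff ℝ 1 b) (hbs : HasCompactSupport b) :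
    Integrable (planarCurl v w a b) μ ∧ ∫ x, planarCurl v w a b x ∂μ = 0 := by
  have hb' : Integrable (fun x => fderiv ℝ b x v) μ :=
    (continuous_fderiv_apply hb v).integrable_of_hasCompactSupport (hbs.fderiv_apply ℝ v)
  have ha' : Integrable (fun x => fderiv ℝ a x w) μ :=
    (continuous_fderiv_apply ha w).integrable_of_hasCompactSupport (has.fderiv_apply ℝ w)
  refine ⟨hb'.sub ha', ?_⟩
  simp only [planarCurl]
  rw [integral_sub hb' ha', integral_fderiv_apply_eq_zero hb hbs,
    integral_fderiv_apply_eq_zero ha has, sub_zero]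

theorem integral_planarCurl_mul_norm_sq_le {φ : E → ℂ} (v w : E) (ha : ContDiff ℝ 1 a)
    (hb : ContDiff ℝ 1 b) (hφ : ContDiff ℝ 2 φ) (hφs : HasCompactSupport φ) :
    ∫ x, planarCurl v w a b x * ‖φ x‖ ^ 2 ∂μ ≤
      ∫ x, (‖magneticDeriv a v φ x‖ ^ 2 + ‖magneticDeriv b w φ x‖ ^ 2) ∂μ := by
  let curlJ : E → ℝ := planarCurl v w (magneticCurrent a v φ) (magneticCurrent b w φ)
  obtain ⟨hcurlJ, integral_curlJ⟩ : Integrable curlJ μ ∧ ∫ x, curlJ x ∂μ = 0 :=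
    integrable_planarCurl_and_integral_eq_zero v w
      (contDiff_magneticCurrent ha hφ) (hasCompactSupport_magneticCurrent hφs)
      (contDiff_magneticCurrent hb hφ) (hasCompactSupport_magneticCurrent hφs)
  have hfield : Integrable (fun x => planarCurl v w a b x * ‖φ x‖ ^ 2) μ :=
    ((continuous_fderiv_apply hb v).sub (continuous_fderiv_apply ha w)).mul
      (hφ.continuous.norm.pow 2)
      |>.integrable_of_hasCompactSupport (hasCompactSupport_norm_sq hφs).mul_left
  have henergy {c : E → ℝ} (hc : ContDiff ℝ 1 c) (u : E) :
      Integrable (fun x => ‖magneticDeriv c u φ x‖ ^ 2) μ :=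
    ((contDiff_magneticDeriv hc hφ).continuous.norm.pow 2).integrable_of_hasCompactSupport
      (hasCompactSupport_norm_sq (hasCompactSupport_magneticDeriv hφs))
  have pointwise (x : E) : planarCurl v w a b x * ‖φ x‖ ^ 2 + curlJ x ≤
      ‖magneticDeriv a v φ x‖ ^ 2 + ‖magneticDeriv b w φ x‖ ^ 2 := by
    have hweitzenbock := norm_sq_magneticDeriv_add_I_mul (v := v) (w := w)
      (ha.differentiable one_ne_zero x) (hb.differentiable one_ne_zero x) hφ.contDiffAt
    linarith [sq_nonneg ‖magneticDeriv a v φ x + I * magneticDeriv b w φ x‖]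
  calc ∫ x, planarCurl v w a b x * ‖φ x‖ ^ 2 ∂μ
      = ∫ x, (planarCurl v w a b x * ‖φ x‖ ^ 2 + curlJ x) ∂μ := by
        rw [integral_add hfield hcurlJ, integral_curlJ, add_zero]
    _ ≤ ∫ x, (‖magneticDeriv a v φ x‖ ^ 2 + ‖magneticDeriv b w φ x‖ ^ 2) ∂μ :=
        integral_mono (hfield.add hcurlJ) ((henergy ha v).add (henergy hb w)) pointwise

end MagneticLowerBound

section ConstantField

open Complex

lemma planarCurl_Fpot (x : ℝ × ℝ) :
    planarCurl (1, 0) (0, 1) (fun y => (Fpot y).1) (fun y => (Fpot y).2) x = 1 := by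
  have h₁ : HasFDerivAt (fun y => (Fpot y).1) _ x :=
    (hasFDerivAt_snd (𝕜 := ℝ) (p := x)).neg.mul_const (2⁻¹ : ℝ)
  have h₂ : HasFDerivAt (fun y => (Fpot y).2) _ x :=
    (hasFDerivAt_fst (𝕜 := ℝ) (p := x)).mul_const (2⁻¹ : ℝ)
  rw [planarCurl, h₁.fderiv, h₂.fderiv]
  norm_num

theorem integral_norm_sq_le_integral_mnorm2_Fpot {φ : ℝ × ℝ → ℂ} (hφ : ContDiff ℝ 2 φ)
    (hφs : HasCompactSupport φ) : ∫ x, ‖φ x‖ ^ 2 ≤ ∫ x, mnorm2 Fpot φ x := by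
  have hF₁ : ContDiff ℝ 1 (fun y => (Fpot y).1) := contDiff_snd.neg.div_const 2
  have hF₂ : ContDiff ℝ 1 (fun y => (Fpot y).2) := contDiff_fst.div_const 2
  have hbound := integral_planarCurl_mul_norm_sq_le (μ := volume) (1, 0) (0, 1) hF₁ hF₂ hφ hφs
  simp only [planarCurl_Fpot, one_mul] at hbound
  exact hbound

/-- The phase whose gradient is the constant `F(x) - F(x - h)`; it makes translation by `h` commute
with the magnetic derivatives of the constant field. -/
def magneticPhase (h x : ℝ × ℝ) : ℝ := (h.1 * x.2 - h.2 * x.1) / 2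

lemma contDiff_magneticPhase {n : WithTop ℕ∞} (h : ℝ × ℝ) : ContDiff ℝ n (magneticPhase h) := by
  unfold magneticPhase
  fun_prop

lemma fderiv_magneticPhase (h x v : ℝ × ℝ) :
    fderiv ℝ (magneticPhase h) x v = magneticPhase h v := by
  have hd : HasFDerivAt (magneticPhase h) _ x :=
    ((hasFDerivAt_snd (𝕜 := ℝ) (p := x)).const_mul h.1).sub
      ((hasFDerivAt_fst (𝕜 := ℝ) (p := x)).const_mul h.2) |>.mul_const (2⁻¹ : ℝ)
  rw [hd.fderiv]
  simp only [smul_apply, sub_apply, ContinuousLinearMap.coe_snd', smul_eq_mul,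
    ContinuousLinearMap.coe_fst', magneticPhase]
  ring

/-- The magnetic translation of `φ` by `h` for the potential `F`. -/
def magneticTranslate (h : ℝ × ℝ) (φ : ℝ × ℝ → ℂ) (x : ℝ × ℝ) : ℂ :=
  cexp (magneticPhase h x * I) * φ (x - h)

variable {φ : ℝ × ℝ → ℂ}

lemma norm_magneticTranslate (h : ℝ × ℝ) (φ : ℝ × ℝ → ℂ) (x : ℝ × ℝ) :
    ‖magneticTranslate h φ x‖ = ‖φ (x - h)‖ := by
  rw [magneticTranslate, norm_mul, norm_exp_ofReal_mul_I, one_mul]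

lemma contDiff_magneticTranslate {n : WithTop ℕ∞} (h : ℝ × ℝ) (hφ : ContDiff ℝ n φ) :
    ContDiff ℝ n (magneticTranslate h φ) :=
  ((ofRealCLM.contDiff.comp (contDiff_magneticPhase h)).mul contDiff_const).cexp.mul
    (hφ.comp (contDiff_id.sub contDiff_const))

lemma hasCompactSupport_magneticTranslate (h : ℝ × ℝ) (hφ : HasCompactSupport φ) :
    HasCompactSupport (magneticTranslate h φ) :=
  (hφ.comp_homeomorph (Homeomorph.subRight h)).mul_left

lemma tsupport_magneticTranslate_subset (h : ℝ × ℝ) (φ : ℝ × ℝ → ℂ) :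
    tsupport (magneticTranslate h φ) ⊆ (· - h) ⁻¹' tsupport φ :=
  tsupport_mul_subset_right.trans
    (tsupport_comp_subset_preimage φ (continuous_id.sub continuous_const))

lemma mnorm2_Fpot_magneticTranslate (h : ℝ × ℝ) (hφ : Differentiable ℝ φ) (x : ℝ × ℝ) :
    mnorm2 Fpot (magneticTranslate h φ) x = mnorm2 Fpot φ (x - h) := by
  have covariant {a : ℝ × ℝ → ℝ} {v : ℝ × ℝ} (ha : a x = a (x - h) + magneticPhase h v) :
      ‖magneticDeriv a v (magneticTranslate h φ) x‖ = ‖magneticDeriv a v φ (x - h)‖ := by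
    have hgauge : magneticDeriv a v (magneticTranslate h φ) x =
        cexp (magneticPhase h x * I) *
          magneticDeriv (fun y => a (y - h)) v (fun y => φ (y - h)) x :=
      magneticDeriv_exp_mul ((contDiff_magneticPhase h).differentiable one_ne_zero x)
        ((hφ (x - h)).comp x (differentiableAt_id.sub_const h))
        (by rw [ha, fderiv_magneticPhase])
    rw [hgauge, magneticDeriv_comp_sub, norm_mul, norm_exp_ofReal_mul_I, one_mul]
  have h₁ : ‖mg1 Fpot (magneticTranslate h φ) x‖ = ‖mg1 Fpot φ (x - h)‖ :=
    covariant (a := fun y => (Fpot y).1) (by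
      simp only [Fpot, magneticPhase, Prod.fst_sub, Prod.snd_sub]
      ring)
  have h₂ : ‖mg2 Fpot (magneticTranslate h φ) x‖ = ‖mg2 Fpot φ (x - h)‖ :=
    covariant (a := fun y => (Fpot y).2) (by
      simp only [Fpot, magneticPhase, Prod.fst_sub, Prod.snd_sub]
      ring)
  rw [mnorm2, mnorm2, h₁, h₂]

end ConstantField

section Persson

open Complex
open scoped Pointwise

lemma exists_contDiff_hasCompactSupport_integral_norm_sq_eq_one {E : Type*} [NormedAddCommGroup E]
    [NormedSpace ℝ E] [FiniteDimensional ℝ E] [MeasurableSpace E] [BorelSpace E] (μ : Measure E)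
    [IsFiniteMeasureOnCompacts μ] [μ.IsOpenPosMeasure] :
    ∃ φ : E → ℂ, ContDiff ℝ (⊤ : ℕ∞) φ ∧ HasCompactSupport φ ∧ ∫ x, ‖φ x‖ ^ 2 ∂μ = 1 := by
  let β : ContDiffBump (0 : E) := default
  have hβs : HasCompactSupport (fun x => β x ^ 2) :=
    β.hasCompactSupport.comp_left (g := fun t => t ^ 2) (by simp)
  have hβ0 : β 0 = 1 := β.one_of_mem_closedBall (Metric.mem_closedBall_self β.rIn_pos.le)
  have hpos : 0 < ∫ x, β x ^ 2 ∂μ :=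
    (β.continuous.pow 2).integral_pos_of_hasCompactSupport_nonneg_nonzero (x := 0) hβs
      (fun x => sq_nonneg (β x)) (by simp [hβ0])
  refine ⟨fun x => ((√(∫ y, β y ^ 2 ∂μ))⁻¹ * β x : ℝ),
    ofRealCLM.contDiff.comp (contDiff_const.mul β.contDiff),
    β.hasCompactSupport.mul_left.comp_left ofReal_zero, ?_⟩
  simp only [norm_real, Real.norm_eq_abs, sq_abs, mul_pow, inv_pow, Real.sq_sqrt hpos.le]
  rw [integral_const_mul, inv_mul_cancel₀ hpos.ne']

variable {a m : ℝ}

/-- The values of the exterior energy `(1/m)‖(∇ - iF)φ‖² + a` on the `L²`-normalized test functions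
`φ ∈ C₀^∞(U)`. -/
def testEnergies (U : Set (ℝ × ℝ)) (a m : ℝ) : Set ℝ :=
  {r : ℝ | ∃ φ : ℝ × ℝ → ℂ, ContDiff ℝ (⊤ : ℕ∞) φ ∧ HasCompactSupport φ ∧
    tsupport φ ⊆ U ∧ (∫ x : ℝ × ℝ, ‖φ x‖ ^ 2) = 1 ∧
    r = (1 / m) * (∫ x : ℝ × ℝ, mnorm2 Fpot φ x) + a}

lemma SigmaP_eq_sSup_sInf_testEnergies (Ω : Set (ℝ × ℝ)) (a m : ℝ) :
    SigmaP Ω a m = sSup {s | ∃ K, IsCompact K ∧ K ⊆ Ωᶜ ∧ s = sInf (testEnergies (Ωᶜ \ K) a m)} :=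
  rfl

lemma mem_lowerBounds_testEnergies (U : Set (ℝ × ℝ)) (a : ℝ) (hm : 0 ≤ m) :
    1 / m + a ∈ lowerBounds (testEnergies U a m) := by
  rintro _ ⟨φ, hφ, hφs, -, hφ1, rfl⟩
  have h : 1 ≤ ∫ x, mnorm2 Fpot φ x :=
    hφ1 ▸ integral_norm_sq_le_integral_mnorm2_Fpot (contDiff_infty.1 hφ 2) hφs
  have : 1 / m ≤ (1 / m) * ∫ x, mnorm2 Fpot φ x := le_mul_of_one_le_right (by positivity) h
  linarith

lemma exists_forall_isBounded_mem_testEnergies_compl (a m : ℝ) :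
    ∃ e, ∀ B : Set (ℝ × ℝ), Bornology.IsBounded B → e ∈ testEnergies Bᶜ a m := by
  obtain ⟨φ, hφ, hφs, hφ1⟩ :=
    exists_contDiff_hasCompactSupport_integral_norm_sq_eq_one (volume : Measure (ℝ × ℝ))
  refine ⟨(1 / m) * (∫ x, mnorm2 Fpot φ x) + a, fun B hB => ?_⟩
  obtain ⟨h, hh⟩ : ∃ h, h ∉ B - tsupport φ := by
    by_contra! hall
    exact NormedSpace.unbounded_univ ℝ (ℝ × ℝ)
      (eq_univ_of_forall hall ▸ hB.sub hφs.isCompact.isBounded)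
  refine ⟨magneticTranslate h φ, contDiff_magneticTranslate h hφ,
    hasCompactSupport_magneticTranslate h hφs, fun x hx hxB => hh ?_, ?_, ?_⟩
  · exact ⟨x, hxB, x - h, tsupport_magneticTranslate_subset h φ hx, sub_sub_cancel x h⟩
  · simp only [norm_magneticTranslate]
    rw [integral_sub_right_eq_self (fun x => ‖φ x‖ ^ 2) h, hφ1]
  · simp only [mnorm2_Fpot_magneticTranslate h (hφ.differentiable (by simp))]
    rw [integral_sub_right_eq_self (mnorm2 Fpot φ) h]

theorem persson_lower_bound_general (Ω : Set (ℝ × ℝ)) (hb : Bornology.IsBounded Ω) (a m : ℝ)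
    (hm : 0 < m) : 1 / m + a ≤ SigmaP Ω a m := by
  obtain ⟨e, he⟩ := exists_forall_isBounded_mem_testEnergies_compl a m
  have hlow (K : Set (ℝ × ℝ)) : 1 / m + a ∈ lowerBounds (testEnergies (Ωᶜ \ K) a m) :=
    mem_lowerBounds_testEnergies _ a hm.le
  have hmem {K : Set (ℝ × ℝ)} (hK : IsCompact K) : e ∈ testEnergies (Ωᶜ \ K) a m := by
    rw [sdiff_eq, ← compl_union]
    exact he _ (hb.union hK.isBounded)
  rw [SigmaP_eq_sSup_sInf_testEnergies]
  calc 1 / m + a ≤ sInf (testEnergies (Ωᶜ \ ∅) a m) :=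
        le_csInf ⟨e, hmem isCompact_empty⟩ (hlow ∅)
    _ ≤ sSup {s | ∃ K, IsCompact K ∧ K ⊆ Ωᶜ ∧ s = sInf (testEnergies (Ωᶜ \ K) a m)} :=
        le_csSup ⟨e, by rintro _ ⟨K, hK, -, rfl⟩; exact csInf_le ⟨_, hlow K⟩ (hmem hK)⟩
        ⟨∅, isCompact_empty, empty_subset _, rfl⟩

end Persson

/-- for `Ω` open and bounded, `Σ ≥ 1/m + a`; by Persson's lemma the
bottom of the essential spectrum of the interface operator is at least `1/m + a`. -/
theorem persson_lower_bound (Ω : Set (ℝ × ℝ)) (hΩ : IsOpen Ω)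
    (hb : Bornology.IsBounded Ω) (a m : ℝ) (ha : 0 < a) (hm : 0 < m) :
    1/m + a ≤ SigmaP Ω a m := by
  exact persson_lower_bound_general Ω hb a m hm
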